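/- Let W : ℝ² → ℝ be smooth, doubly 2π-periodic and symmetric, and let φ : ℝ² → ℝ be a nonzero smooth, doubly 2π-periodic, symmetric function with −Δφ + Wφ = 0. Assume (a) ∫(|∇v|² + W v²) dxdy ≥ 0 for every smooth, doubly 2π-periodic, symmetric v : ℝ² → ℝ, and (b) every smooth, doubly 2π-periodic, symmetric solution v of −Δv + Wv = 0 is a real scalar multiple of φ. Then there exists δ > 0 such that ∫(|∇v|² + W v²) dxdy ≥ δ ∫ v² dxdy for every smooth, doubly 2π-periodic, symmetric v : ℝ² → ℝ satisfying ∫ vφ dxdy = 0. -/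

import Mathlib

/-!
If coercivity fails, there are normalised functions `vₙ`, orthogonal to the kernel of `-Δ + W`,
whose energies tend to `0`. Their cosine coefficients are bounded, so along a subsequence they
converge, each to the corresponding coefficient of a limit `V`. By the Cauchy-Schwarz inequality for
the nonnegative energy form, `V` solves `-Δ V + W V = 0` weakly. Written as `(1 - Δ) V = (1 - W) V`
in frequency space, the equation improves the decay of the coefficients by two orders, while
multiplication by the smooth function `1 - W` costs nothing by Peetre's inequality; hence `V` is
smooth and lies in the kernel. The energy controls the `H¹` norm, so a fixed finite set of modes
carries half of the mass of every `vₙ` and `V ≠ 0`. But `∫ vₙ V = 0` for all `n` gives `∫ V² = 0`.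
-/

noncomputable section
open Real MeasureTheory Filter

/-- doubly 2π-periodic -/
def DblPeriodic (u : ℝ → ℝ → ℝ) : Prop :=
  ∀ x y : ℝ, u (x + 2*π) y = u x y ∧ u x (y + 2*π) = u x y

/-- symmetric: even in each variable separately -/
def SymFun (u : ℝ → ℝ → ℝ) : Prop :=
  ∀ x y : ℝ, u (-x) y = u x y ∧ u x (-y) = u x y

/-- smooth as a function on ℝ² -/
def Smooth2 (u : ℝ → ℝ → ℝ) : Prop :=
  ContDiff ℝ (⊤ : ℕ∞) fun p : ℝ × ℝ => u p.1 p.2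

/-- the Laplacian Δu = u_xx + u_yy -/
def lap (u : ℝ → ℝ → ℝ) (x y : ℝ) : ℝ :=
  deriv (fun t => deriv (fun s => u s y) t) x + deriv (fun t => deriv (fun s => u x s) t) y

/-- integral over the fundamental square [0,2π] × [0,2π] -/
def integ2 (f : ℝ → ℝ → ℝ) : ℝ :=
  ∫ x in (0:ℝ)..(2*π), ∫ y in (0:ℝ)..(2*π), f x y

/-- partial derivative in the first variable -/
def pdx (u : ℝ → ℝ → ℝ) (x y : ℝ) : ℝ := deriv (fun s => u s y) x

/-- partial derivative in the second variable -/
def pdy (u : ℝ → ℝ → ℝ) (x y : ℝ) : ℝ := deriv (fun s => u x s) y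

/-- the functional B_c(u) = (1/2)∫(|∇u|² + c u²) dxdy -/
def Bc (c : ℝ) (u : ℝ → ℝ → ℝ) : ℝ :=
  (1/2) * integ2 (fun x y => (pdx u x y)^2 + (pdy u x y)^2 + c * (u x y)^2)

/-! ### Integration over the square -/

/-- The fundamental square `[0, 2π] × [0, 2π]`, as the domain of a set integral. -/
def square : Set (ℝ × ℝ) := Set.Icc 0 (2 * π) ×ˢ Set.Icc 0 (2 * π)

/-- Joint continuity of a curried function of two variables, in the style of `Smooth2`. -/
def Cont2 (f : ℝ → ℝ → ℝ) : Prop := Continuous fun p : ℝ × ℝ => f p.1 p.2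

lemma isCompact_square : IsCompact square := isCompact_Icc.prod isCompact_Icc

namespace Cont2

variable {f g : ℝ → ℝ → ℝ}

lemma add (hf : Cont2 f) (hg : Cont2 g) : Cont2 (f + g) := Continuous.add hf hg

lemma mul (hf : Cont2 f) (hg : Cont2 g) : Cont2 (f * g) := Continuous.mul hf hg

lemma const_smul (hf : Cont2 f) (c : ℝ) : Cont2 (c • f) := Continuous.const_smul hf c

lemma abs (hf : Cont2 f) : Cont2 |f| := Continuous.abs hf

lemma flip (hf : Cont2 f) : Cont2 (flip f) := Continuous.comp hf continuous_swap

lemma left (hf : Cont2 f) (y : ℝ) : Continuous fun x => f x y :=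
  Continuous.comp hf (Continuous.prodMk_left y)

lemma integrableOn (hf : Cont2 f) {s : Set (ℝ × ℝ)} (hs : IsCompact s) :
    IntegrableOn (fun p : ℝ × ℝ => f p.1 p.2) s :=
  hf.continuousOn.integrableOn_compact hs

lemma exists_abs_le (hf : Cont2 f) : ∃ C, ∀ p ∈ square, |f p.1 p.2| ≤ C :=
  isCompact_square.exists_bound_of_continuousOn hf.continuousOn

end Cont2

section integ2

variable {f g : ℝ → ℝ → ℝ}

lemma integ2_eq_setIntegral (hf : Cont2 f) : integ2 f = ∫ p in square, f p.1 p.2 := by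
  have h0 : (0 : ℝ) ≤ 2 * π := by positivity
  simp only [integ2, intervalIntegral.integral_of_le h0, ← integral_Icc_eq_integral_Ioc]
  exact (setIntegral_prod _ (hf.integrableOn isCompact_square)).symm

lemma integ2_add (hf : Cont2 f) (hg : Cont2 g) : integ2 (f + g) = integ2 f + integ2 g := by
  rw [integ2_eq_setIntegral hf, integ2_eq_setIntegral hg, integ2_eq_setIntegral (hf.add hg)]
  exact integral_add (hf.integrableOn isCompact_square) (hg.integrableOn isCompact_square)

lemma integ2_sum {ι : Type*} {S : Finset ι} {f : ι → ℝ → ℝ → ℝ} (hf : ∀ i, Cont2 (f i)) :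
    integ2 (∑ i ∈ S, f i) = ∑ i ∈ S, integ2 (f i) := by
  have hsum : Cont2 (∑ i ∈ S, f i) := by
    simpa only [Cont2, Finset.sum_apply] using continuous_finsetSum S fun i _ => hf i
  rw [integ2_eq_setIntegral hsum]
  simp only [Finset.sum_apply, integ2_eq_setIntegral (hf _)]
  exact integral_finsetSum S fun i _ => (hf i).integrableOn isCompact_square

lemma integ2_smul (c : ℝ) (f : ℝ → ℝ → ℝ) : integ2 (c • f) = c * integ2 f := by
  simp [integ2]

lemma integ2_one : integ2 1 = 4 * π ^ 2 := by
  simp only [integ2, Pi.one_apply, intervalIntegral.integral_const, sub_zero, smul_eq_mul]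
  ring

lemma integ2_mono (hf : Cont2 f) (hg : Cont2 g) (h : ∀ p ∈ square, f p.1 p.2 ≤ g p.1 p.2) :
    integ2 f ≤ integ2 g := by
  rw [integ2_eq_setIntegral hf, integ2_eq_setIntegral hg]
  exact setIntegral_mono_on (hf.integrableOn isCompact_square) (hg.integrableOn isCompact_square)
    isCompact_square.measurableSet h

lemma abs_integ2_le (hf : Cont2 f) : |integ2 f| ≤ integ2 |f| := by
  rw [integ2_eq_setIntegral hf, integ2_eq_setIntegral hf.abs]
  exact abs_integral_le_integral_abs

lemma integ2_flip (hf : Cont2 f) : integ2 (flip f) = integ2 f := by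
  refine intervalIntegral_intervalIntegral_swap ?_
  exact (hf.flip.integrableOn (isCompact_uIcc.prod isCompact_uIcc)).mono_set
    (Set.prod_mono Set.uIoc_subset_uIcc Set.uIoc_subset_uIcc)

end integ2

/-- The `L²` inner product over the fundamental square. -/
def l2Inner (f g : ℝ → ℝ → ℝ) : ℝ := integ2 (f * g)

section l2Inner

variable {f g h : ℝ → ℝ → ℝ}

lemma l2Inner_comm (f g : ℝ → ℝ → ℝ) : l2Inner f g = l2Inner g f := by
  simp only [l2Inner, mul_comm f g]

lemma l2Inner_mul_comm (f g h : ℝ → ℝ → ℝ) : l2Inner f (g * h) = l2Inner (g * f) h := by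
  simp only [l2Inner, mul_left_comm f g h, mul_assoc]

lemma l2Inner_add_left (hf : Cont2 f) (hg : Cont2 g) (hh : Cont2 h) :
    l2Inner (f + g) h = l2Inner f h + l2Inner g h := by
  simp only [l2Inner, add_mul, integ2_add (hf.mul hh) (hg.mul hh)]

lemma l2Inner_add_right (hf : Cont2 f) (hg : Cont2 g) (hh : Cont2 h) :
    l2Inner f (g + h) = l2Inner f g + l2Inner f h := by
  simp only [l2Inner_comm f, l2Inner_add_left hg hh hf]

lemma l2Inner_smul_left (c : ℝ) (f g : ℝ → ℝ → ℝ) : l2Inner (c • f) g = c * l2Inner f g := by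
  simp only [l2Inner, smul_mul_assoc, integ2_smul]

lemma l2Inner_smul_right (c : ℝ) (f g : ℝ → ℝ → ℝ) : l2Inner f (c • g) = c * l2Inner f g := by
  simp only [l2Inner_comm f, l2Inner_smul_left]

lemma l2Inner_sum_right {ι : Type*} {S : Finset ι} {g : ι → ℝ → ℝ → ℝ} (hf : Cont2 f)
    (hg : ∀ i, Cont2 (g i)) : l2Inner f (∑ i ∈ S, g i) = ∑ i ∈ S, l2Inner f (g i) := by
  simp only [l2Inner, Finset.mul_sum, integ2_sum fun i => hf.mul (hg i)]

lemma l2Inner_self_nonneg (hf : Cont2 f) : 0 ≤ l2Inner f f := by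
  rw [l2Inner, integ2_eq_setIntegral (hf.mul hf)]
  exact integral_nonneg fun p => mul_self_nonneg (f p.1 p.2)

end l2Inner

/-! ### Partial derivatives -/

section PartialDerivatives

variable {f g : ℝ → ℝ → ℝ}

lemma Smooth2.cont2 (hf : Smooth2 f) : Cont2 f := ContDiff.continuous hf

lemma Smooth2.flip (hf : Smooth2 f) : Smooth2 (flip f) :=
  ContDiff.comp hf (contDiff_snd.prodMk contDiff_fst)

lemma Smooth2.left (hf : Smooth2 f) (y : ℝ) : ContDiff ℝ (⊤ : ℕ∞) fun x => f x y :=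
  ContDiff.comp hf (contDiff_id.prodMk contDiff_const)

lemma Smooth2.hasDerivAt_pdx (hf : Smooth2 f) (x y : ℝ) :
    HasDerivAt (fun s => f s y) (pdx f x y) x :=
  ((hf.left y).differentiable (by simp)).differentiableAt.hasDerivAt

lemma Smooth2.pdx_eq_fderiv (hf : Smooth2 f) (p : ℝ × ℝ) :
    pdx f p.1 p.2 = fderiv ℝ (fun p : ℝ × ℝ => f p.1 p.2) p (1, 0) := by
  have hfderiv := (ContDiff.differentiable hf (by simp)).differentiableAt.hasFDerivAt (x := p)
  have hline : HasDerivAt (fun s => (s, p.2)) ((1, 0) : ℝ × ℝ) p.1 :=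
    (hasDerivAt_id p.1).prodMk (hasDerivAt_const p.1 p.2)
  exact (hfderiv.comp_hasDerivAt p.1 hline).deriv

lemma Smooth2.pdx (hf : Smooth2 f) : Smooth2 (pdx f) := by
  simp only [Smooth2, hf.pdx_eq_fderiv]
  exact (ContDiff.fderiv_right (m := (⊤ : ℕ∞)) hf (by simp)).clm_apply contDiff_const

lemma Smooth2.pdy (hf : Smooth2 f) : Smooth2 (pdy f) := hf.flip.pdx.flip

lemma DblPeriodic.flip (hf : DblPeriodic f) : DblPeriodic (flip f) := fun x y => (hf y x).symm

lemma DblPeriodic.pdx (hf : DblPeriodic f) : DblPeriodic (pdx f) := by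
  refine fun x y => ⟨?_, by simp only [_root_.pdx, (hf _ y).2]⟩
  have h := deriv_comp_add_const (fun s => f s y) (2 * π) x
  simp only [(hf _ y).1] at h
  exact h.symm

lemma DblPeriodic.pdy (hf : DblPeriodic f) : DblPeriodic (pdy f) := hf.flip.pdx.flip

lemma SymFun.flip (hf : SymFun f) : SymFun (flip f) := fun x y => (hf y x).symm

lemma SymFun.pdx_neg_left (hf : SymFun f) (x y : ℝ) : pdx f (-x) y = -pdx f x y := by
  have h := deriv_comp_neg (fun s => f s y) x
  simp only [(hf _ y).1] at h
  exact (neg_eq_iff_eq_neg.mpr h).symm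

lemma SymFun.pdx_pdx (hf : SymFun f) : SymFun (pdx (pdx f)) := by
  refine fun x y => ⟨?_, by simp only [pdx, (hf _ y).2]⟩
  have h := deriv_comp_neg (fun s => pdx f s y) x
  simp only [hf.pdx_neg_left, deriv.fun_neg] at h
  exact (neg_injective h).symm

/-- The boundary terms cancel by periodicity. -/
lemma integ2_pdx_mul (hf : Smooth2 f) (hfp : DblPeriodic f) (hg : Smooth2 g)
    (hgp : DblPeriodic g) : integ2 (pdx f * g) = -integ2 (f * pdx g) := by
  rw [← integ2_flip (hf.pdx.cont2.mul hg.cont2), ← integ2_flip (hf.cont2.mul hg.pdx.cont2),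
    integ2, integ2, ← intervalIntegral.integral_neg]
  congr! 2 with y
  have h := intervalIntegral.integral_mul_deriv_eq_deriv_mul (a := 0) (b := 2 * π)
    (fun x _ => hf.hasDerivAt_pdx x y) (fun x _ => hg.hasDerivAt_pdx x y)
    ((hf.pdx.cont2.left y).intervalIntegrable _ _) ((hg.pdx.cont2.left y).intervalIntegrable _ _)
  have hf0 : f (2 * π) y = f 0 y := by simpa using (hfp 0 y).1
  have hg0 : g (2 * π) y = g 0 y := by simpa using (hgp 0 y).1
  rw [hf0, hg0, sub_self, zero_sub] at h
  exact neg_eq_iff_eq_neg.mp h.symm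

lemma integ2_pdy_mul (hf : Smooth2 f) (hfp : DblPeriodic f) (hg : Smooth2 g)
    (hgp : DblPeriodic g) : integ2 (pdy f * g) = -integ2 (f * pdy g) := by
  rw [← integ2_flip (hf.pdy.cont2.mul hg.cont2), ← integ2_flip (hf.cont2.mul hg.pdy.cont2)]
  exact integ2_pdx_mul hf.flip hfp.flip hg.flip hgp.flip

end PartialDerivatives

/-- The algebra of smooth, doubly `2π`-periodic, symmetric functions, with pointwise operations. -/
def smoothSymPeriodic : Subalgebra ℝ (ℝ → ℝ → ℝ) where
  carrier := {u | Smooth2 u ∧ DblPeriodic u ∧ SymFun u}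
  add_mem' {u v} hu hv :=
    ⟨ContDiff.add hu.1 hv.1, fun x y => by simp [hu.2.1 x y, hv.2.1 x y],
      fun x y => by simp [hu.2.2 x y, hv.2.2 x y]⟩
  mul_mem' {u v} hu hv :=
    ⟨ContDiff.mul hu.1 hv.1, fun x y => by simp [hu.2.1 x y, hv.2.1 x y],
      fun x y => by simp [hu.2.2 x y, hv.2.2 x y]⟩
  algebraMap_mem' _ := ⟨contDiff_const, fun _ _ => ⟨rfl, rfl⟩, fun _ _ => ⟨rfl, rfl⟩⟩

lemma cont2_of_mem {u : ℝ → ℝ → ℝ} (hu : u ∈ smoothSymPeriodic) : Cont2 u := hu.1.cont2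

lemma flip_mem {u : ℝ → ℝ → ℝ} (hu : u ∈ smoothSymPeriodic) : flip u ∈ smoothSymPeriodic :=
  ⟨hu.1.flip, hu.2.1.flip, hu.2.2.flip⟩

lemma pdx_pdx_mem {u : ℝ → ℝ → ℝ} (hu : u ∈ smoothSymPeriodic) :
    pdx (pdx u) ∈ smoothSymPeriodic :=
  ⟨hu.1.pdx.pdx, hu.2.1.pdx.pdx, hu.2.2.pdx_pdx⟩

lemma pdy_pdy_mem {u : ℝ → ℝ → ℝ} (hu : u ∈ smoothSymPeriodic) :
    pdy (pdy u) ∈ smoothSymPeriodic :=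
  flip_mem (pdx_pdx_mem (flip_mem hu))

lemma lap_mem {u : ℝ → ℝ → ℝ} (hu : u ∈ smoothSymPeriodic) : lap u ∈ smoothSymPeriodic :=
  add_mem (pdx_pdx_mem hu) (pdy_pdy_mem hu)

/-! ### The Schrödinger operator and its energy -/

/-- The Schrödinger operator `-Δ + W`; for `W = 1` it is the elliptic operator `1 - Δ`. -/
def schrodinger (W v : ℝ → ℝ → ℝ) : ℝ → ℝ → ℝ := -lap v + W * v

/-- The energy `∫ (|∇v|² + W v²)`; for `W = 1` it is the squared `H¹` norm. -/
def energy (W v : ℝ → ℝ → ℝ) : ℝ :=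
  integ2 fun x y => pdx v x y ^ 2 + pdy v x y ^ 2 + W x y * v x y ^ 2

section Energy

variable {W u v : ℝ → ℝ → ℝ}

lemma schrodinger_mem (hW : W ∈ smoothSymPeriodic) (hv : v ∈ smoothSymPeriodic) :
    schrodinger W v ∈ smoothSymPeriodic :=
  add_mem (neg_mem (lap_mem hv)) (mul_mem hW hv)

lemma l2Inner_lap (hu : u ∈ smoothSymPeriodic) (hv : v ∈ smoothSymPeriodic) :
    l2Inner u (lap v) = -(integ2 (pdx u * pdx v + pdy u * pdy v)) := by
  have hux := integ2_pdx_mul hu.1 hu.2.1 hv.1.pdx hv.2.1.pdx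
  have huy := integ2_pdy_mul hu.1 hu.2.1 hv.1.pdy hv.2.1.pdy
  rw [integ2_add (hu.1.pdx.cont2.mul hv.1.pdx.cont2) (hu.1.pdy.cont2.mul hv.1.pdy.cont2), hux, huy]
  change l2Inner u (pdx (pdx v) + pdy (pdy v)) = _
  rw [l2Inner_add_right hu.1.cont2 hv.1.pdx.pdx.cont2 hv.1.pdy.pdy.cont2, l2Inner, l2Inner]
  ring

lemma l2Inner_schrodinger (hW : W ∈ smoothSymPeriodic) (hu : u ∈ smoothSymPeriodic)
    (hv : v ∈ smoothSymPeriodic) : l2Inner u (schrodinger W v) =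
      integ2 (pdx u * pdx v + pdy u * pdy v) + integ2 (W * (u * v)) := by
  rw [schrodinger, l2Inner_add_right (cont2_of_mem hu) (cont2_of_mem (neg_mem (lap_mem hv)))
    (cont2_of_mem (mul_mem hW hv)), ← neg_one_smul ℝ (lap v), l2Inner_smul_right,
    l2Inner_lap hu hv, l2Inner, mul_left_comm u W v]
  ring

lemma l2Inner_schrodinger_comm (hW : W ∈ smoothSymPeriodic) (hu : u ∈ smoothSymPeriodic)
    (hv : v ∈ smoothSymPeriodic) :
    l2Inner u (schrodinger W v) = l2Inner (schrodinger W u) v := by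
  rw [l2Inner_comm _ v, l2Inner_schrodinger hW hu hv, l2Inner_schrodinger hW hv hu]
  simp only [mul_comm]

lemma l2Inner_schrodinger_self (hW : W ∈ smoothSymPeriodic) (hv : v ∈ smoothSymPeriodic) :
    l2Inner v (schrodinger W v) = energy W v := by
  rw [l2Inner_schrodinger hW hv hv, ← integ2_add ((hv.1.pdx.cont2.mul hv.1.pdx.cont2).add
    (hv.1.pdy.cont2.mul hv.1.pdy.cont2)) (cont2_of_mem (mul_mem hW (mul_mem hv hv)))]
  simp only [← pow_two]
  rfl

/-- The energy form `(u, v) ↦ ∫ u (-Δ + W) v`, a symmetric bilinear form on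
`smoothSymPeriodic` by Green's identity. -/
def energyForm (hW : W ∈ smoothSymPeriodic) : LinearMap.BilinForm ℝ smoothSymPeriodic :=
  LinearMap.mk₂ ℝ (fun u v => l2Inner u (schrodinger W v))
    (fun u₁ u₂ v => l2Inner_add_left (cont2_of_mem u₁.2) (cont2_of_mem u₂.2)
      (cont2_of_mem (schrodinger_mem hW v.2)))
    (fun c u v => l2Inner_smul_left c u (schrodinger W v))
    (fun u v₁ v₂ => by
      simp only [l2Inner_schrodinger_comm hW u.2, SetLike.coe_mem]
      exact l2Inner_add_right (cont2_of_mem (schrodinger_mem hW u.2)) (cont2_of_mem v₁.2)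
        (cont2_of_mem v₂.2))
    (fun c u v => by
      simp only [l2Inner_schrodinger_comm hW u.2, SetLike.coe_mem]
      exact l2Inner_smul_right c (schrodinger W u) v)

lemma energyForm_apply (hW : W ∈ smoothSymPeriodic) (u v : smoothSymPeriodic) :
    energyForm hW u v = l2Inner u (schrodinger W v) := rfl

lemma energyForm_self (hW : W ∈ smoothSymPeriodic) (v : smoothSymPeriodic) :
    energyForm hW v v = energy W v :=
  l2Inner_schrodinger_self hW v.2

lemma energyForm_isSymm (hW : W ∈ smoothSymPeriodic) : LinearMap.IsSymm (energyForm hW) where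
  eq u v := by
    simp only [energyForm_apply, RingHom.id_apply, l2Inner_schrodinger_comm hW u.2 v.2]
    exact l2Inner_comm _ _

lemma energy_smul (hW : W ∈ smoothSymPeriodic) (c : ℝ) (hv : v ∈ smoothSymPeriodic) :
    energy W (c • v) = c ^ 2 * energy W v := by
  have h := energyForm_self hW (c • ⟨v, hv⟩)
  rw [map_smul, map_smul, LinearMap.smul_apply, energyForm_self, smul_smul, smul_eq_mul] at h
  rw [pow_two]
  exact h.symm

lemma sq_l2Inner_schrodinger_le (hW : W ∈ smoothSymPeriodic)
    (hnonneg : ∀ w ∈ smoothSymPeriodic, 0 ≤ energy W w) (hu : u ∈ smoothSymPeriodic)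
    (hv : v ∈ smoothSymPeriodic) :
    l2Inner u (schrodinger W v) ^ 2 ≤ energy W u * energy W v := by
  have h := LinearMap.BilinForm.apply_sq_le_of_symm (energyForm hW)
    (fun w => (hnonneg w w.2).trans_eq (energyForm_self hW w).symm) (energyForm_isSymm hW)
    ⟨u, hu⟩ ⟨v, hv⟩
  rwa [energyForm_self, energyForm_self] at h

/-- Gårding's inequality. -/
lemma exists_energy_one_le (hW : W ∈ smoothSymPeriodic) :
    ∃ K, ∀ v ∈ smoothSymPeriodic, energy 1 v ≤ energy W v + K * l2Inner v v := by
  obtain ⟨M, hM⟩ := (cont2_of_mem hW).exists_abs_le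
  refine ⟨1 + M, fun v hv => ?_⟩
  have hvv := mul_mem hv hv
  have hpot : -M * integ2 (v * v) ≤ integ2 (W * (v * v)) := by
    rw [← integ2_smul]
    refine integ2_mono ((cont2_of_mem hvv).const_smul _) (cont2_of_mem (mul_mem hW hvv))
      fun p hp => ?_
    exact mul_le_mul_of_nonneg_right (neg_le_of_abs_le (hM p hp)) (mul_self_nonneg _)
  rw [← l2Inner_schrodinger_self hW hv, ← l2Inner_schrodinger_self (one_mem _) hv,
    l2Inner_schrodinger hW hv hv, l2Inner_schrodinger (one_mem _) hv hv, one_mul, l2Inner]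
  linarith

end Energy

/-! ### Cosine modes and decay of coefficients -/

/-- The cosine mode `cos (m x) cos (n y)` with `k = (m, n)`. Both `m` and `n` run through all
integers, so modes are repeated, which makes every normalising constant equal to `1 / (4π²)`. -/
def cosMode (k : ℤ × ℤ) (x y : ℝ) : ℝ := cos (k.1 * x) * cos (k.2 * y)

/-- The frequency weight `1 + |k|²`, the eigenvalue of `1 - Δ` on `cosMode k`. -/
def freqWeight (k : ℤ × ℤ) : ℝ := 1 + (k.1 : ℝ) ^ 2 + (k.2 : ℝ) ^ 2

/-- The (unnormalised) cosine coefficient of `f` at the frequency `k`. -/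
def cosCoeff (f : ℝ → ℝ → ℝ) (k : ℤ × ℤ) : ℝ := l2Inner f (cosMode k)

lemma one_le_freqWeight (k : ℤ × ℤ) : 1 ≤ freqWeight k := by
  rw [freqWeight, add_assoc]
  exact le_add_of_nonneg_right (by positivity)

lemma freqWeight_pos (k : ℤ × ℤ) : 0 < freqWeight k := one_pos.trans_le (one_le_freqWeight k)

lemma finite_setOf_freqWeight_le (R : ℝ) : {k | freqWeight k ≤ R}.Finite := by
  refine ((Set.finite_Icc (-⌈R⌉) ⌈R⌉).prod (Set.finite_Icc (-⌈R⌉) ⌈R⌉)).subset fun k hk => ?_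
  have abs_le_ceil (m : ℤ) (hm : (m : ℝ) ^ 2 ≤ R) : |m| ≤ ⌈R⌉ := by
    have hm' : ((|m| : ℤ) : ℝ) ≤ R := by
      refine le_trans ?_ hm
      rw [← sq_abs, ← Int.cast_abs]
      exact_mod_cast Int.le_self_sq |m|
    exact_mod_cast hm'.trans (Int.le_ceil R)
  rw [Set.mem_ofPred_eq, freqWeight] at hk
  exact ⟨abs_le.mp (abs_le_ceil k.1 (by nlinarith)), abs_le.mp (abs_le_ceil k.2 (by nlinarith))⟩

lemma abs_cosMode_le_one (k : ℤ × ℤ) (x y : ℝ) : |cosMode k x y| ≤ 1 := by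
  rw [cosMode, abs_mul]
  exact mul_le_one₀ (abs_cos_le_one _) (abs_nonneg _) (abs_cos_le_one _)

lemma flip_cosMode (k : ℤ × ℤ) : flip (cosMode k) = cosMode k.swap := by
  funext x y
  exact mul_comm _ _

lemma cosMode_mem (k : ℤ × ℤ) : cosMode k ∈ smoothSymPeriodic := by
  have cos_periodic (m : ℤ) (x : ℝ) : cos (m * (x + 2 * π)) = cos (m * x) := by
    rw [mul_add, cos_add_int_mul_two_pi]
  refine ⟨?_, fun x y => ?_, fun x y => ?_⟩
  · unfold Smooth2 cosMode
    fun_prop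
  · simp only [cosMode, cos_periodic, and_self]
  · simp only [cosMode, mul_neg, cos_neg, and_self]

lemma pdx_pdx_cosMode (k : ℤ × ℤ) : pdx (pdx (cosMode k)) = (-(k.1 : ℝ) ^ 2) • cosMode k := by
  funext x y
  have hderiv (t : ℝ) : HasDerivAt (fun s => cos (k.1 * s) * cos (k.2 * y))
      (-sin (k.1 * t) * (k.1 * 1) * cos (k.2 * y)) t :=
    ((hasDerivAt_id t).const_mul (k.1 : ℝ)).cos.mul_const _
  have hderiv' : HasDerivAt (fun t => -sin (k.1 * t) * (k.1 * 1) * cos (k.2 * y))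
      (-(cos (k.1 * x) * (k.1 * 1)) * (k.1 * 1) * cos (k.2 * y)) x :=
    (((hasDerivAt_id x).const_mul (k.1 : ℝ)).sin.neg.mul_const _).mul_const _
  simp only [pdx, cosMode, (hderiv _).deriv, hderiv'.deriv, Pi.smul_apply, smul_eq_mul]
  ring

lemma pdy_pdy_cosMode (k : ℤ × ℤ) : pdy (pdy (cosMode k)) = (-(k.2 : ℝ) ^ 2) • cosMode k := by
  change flip (pdx (pdx (flip (cosMode k)))) = _
  rw [flip_cosMode, pdx_pdx_cosMode]
  exact congrArg ((-(k.2 : ℝ) ^ 2) • ·) (flip_cosMode k.swap)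

lemma schrodinger_one_cosMode (k : ℤ × ℤ) :
    schrodinger 1 (cosMode k) = freqWeight k • cosMode k := by
  change -(pdx (pdx (cosMode k)) + pdy (pdy (cosMode k))) + 1 * cosMode k = _
  rw [pdx_pdx_cosMode, pdy_pdy_cosMode, freqWeight, one_mul]
  module

lemma cosCoeff_schrodinger_one {g : ℝ → ℝ → ℝ} (hg : g ∈ smoothSymPeriodic) (k : ℤ × ℤ) :
    cosCoeff (schrodinger 1 g) k = freqWeight k * cosCoeff g k := by
  rw [cosCoeff, ← l2Inner_schrodinger_comm (one_mem _) hg (cosMode_mem k),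
    schrodinger_one_cosMode, l2Inner_smul_right, cosCoeff]

lemma abs_cosCoeff_le {f : ℝ → ℝ → ℝ} (hf : Cont2 f) (k : ℤ × ℤ) :
    |cosCoeff f k| ≤ integ2 |f| := by
  have hfk := hf.mul (cont2_of_mem (cosMode_mem k))
  refine (abs_integ2_le hfk).trans (integ2_mono hfk.abs hf.abs fun p _ => ?_)
  simp only [Pi.abs_apply, Pi.mul_apply, abs_mul]
  exact mul_le_of_le_one_right (abs_nonneg _) (abs_cosMode_le_one k _ _)

/-- The family `c` is `O((1 + |k|²)⁻ˢ)`. -/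
def HasDecay (s : ℕ) (c : ℤ × ℤ → ℝ) : Prop := ∃ C, ∀ k, freqWeight k ^ s * |c k| ≤ C

/-- Superpolynomial decay, which characterises the cosine coefficients of smooth functions. -/
def RapidDecay (c : ℤ × ℤ → ℝ) : Prop := ∀ s, HasDecay s c

lemma hasDecay_succ_iff {s : ℕ} {c : ℤ × ℤ → ℝ} :
    HasDecay (s + 1) c ↔ HasDecay s (fun k => freqWeight k * c k) := by
  simp only [HasDecay, abs_mul, abs_of_pos (freqWeight_pos _), pow_succ, mul_assoc]

lemma rapidDecay_cosCoeff {g : ℝ → ℝ → ℝ} (hg : g ∈ smoothSymPeriodic) :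
    RapidDecay (cosCoeff g) := by
  intro s
  induction s generalizing g with
  | zero => exact ⟨integ2 |g|, fun k => by simpa using abs_cosCoeff_le (cont2_of_mem hg) k⟩
  | succ s ih =>
    rw [hasDecay_succ_iff]
    simpa only [← cosCoeff_schrodinger_one hg] using ih (schrodinger_mem (one_mem _) hg)

lemma summable_freqWeight_sq_inv : Summable fun k => (freqWeight k ^ 2)⁻¹ := by
  have h1 : Summable fun m : ℤ => (1 + (m : ℝ) ^ 2)⁻¹ := by
    refine (summable_one_div_int_pow.mpr one_lt_two).of_norm_bounded_eventually ?_
    filter_upwards [(Set.finite_singleton (0 : ℤ)).compl_mem_cofinite] with m hm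
    have hm' : (m : ℝ) ≠ 0 := by exact_mod_cast hm
    rw [norm_of_nonneg (by positivity), one_div]
    gcongr
    linarith
  refine Summable.of_nonneg_of_le (fun k => by positivity) (fun k => ?_)
    (h1.mul_of_nonneg h1 (fun m => by positivity) (fun m => by positivity))
  rw [← mul_inv]
  refine inv_anti₀ (by positivity) ?_
  rw [freqWeight, pow_two (1 + _ + _)]
  apply mul_le_mul <;> nlinarith [sq_nonneg (k.1 : ℝ), sq_nonneg (k.2 : ℝ)]

namespace HasDecay

variable {s t : ℕ} {c d : ℤ × ℤ → ℝ}

lemma mono (hst : s ≤ t) (hc : HasDecay t c) : HasDecay s c := by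
  obtain ⟨C, hC⟩ := hc
  refine ⟨C, fun k => le_trans ?_ (hC k)⟩
  exact mul_le_mul_of_nonneg_right (pow_le_pow_right₀ (one_le_freqWeight k) hst) (abs_nonneg _)

lemma freqWeight_pow_mul (hc : HasDecay (s + t) c) :
    HasDecay s (fun k => freqWeight k ^ t * c k) := by
  obtain ⟨C, hC⟩ := hc
  refine ⟨C, fun k => ?_⟩
  rw [abs_mul, abs_of_pos (pow_pos (freqWeight_pos k) t), ← mul_assoc, ← pow_add]
  exact hC k

lemma summable_abs (hc : HasDecay 2 c) : Summable fun k => |c k| := by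
  obtain ⟨C, hC⟩ := hc
  refine Summable.of_nonneg_of_le (fun k => abs_nonneg _) (fun k => ?_)
    (summable_freqWeight_sq_inv.mul_left C)
  have hk := freqWeight_pos k
  rw [← div_eq_mul_inv, le_div_iff₀ (by positivity), mul_comm]
  exact hC k

lemma summable_mul (hc : HasDecay 0 c) (hd : Summable fun k => |d k|) :
    Summable fun k => c k * d k := by
  obtain ⟨C, hC⟩ := hc
  refine (hd.mul_left C).of_norm_bounded fun k => ?_
  rw [norm_eq_abs, abs_mul]
  exact mul_le_mul_of_nonneg_right (by simpa only [pow_zero, one_mul] using hC k) (abs_nonneg _)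

end HasDecay

lemma summable_abs_cosCoeff {g : ℝ → ℝ → ℝ} (hg : g ∈ smoothSymPeriodic) :
    Summable fun k => |cosCoeff g k| :=
  (rapidDecay_cosCoeff hg 2).summable_abs

/-! ### Cosine series -/

lemma intervalIntegral_eq_zero_of_odd_of_periodic {f : ℝ → ℝ} {T : ℝ}
    (hodd : Function.Odd f) (hper : Function.Periodic f T) : ∫ t in 0..T, f t = 0 := by
  have hshift := hper.intervalIntegral_add_eq 0 (-T)
  have hneg := intervalIntegral.integral_comp_neg (a := 0) (b := T) f
  simp only [hodd _, intervalIntegral.integral_neg, neg_zero] at hneg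
  simp only [zero_add, neg_add_cancel] at hshift
  linarith

lemma fourier_two_pi_apply (m : ℤ) (t : ℝ) :
    fourier m (t : AddCircle (2 * π)) =
      (cos (m * t) : ℂ) + (sin (m * t) : ℂ) * Complex.I := by
  rw [fourier_coe_apply, Complex.ofReal_cos, Complex.ofReal_sin, ← Complex.exp_mul_I]
  congr 1
  have hpi : (π : ℂ) ≠ 0 := Complex.ofReal_ne_zero.mpr pi_ne_zero
  push_cast
  field_simp

/-- The sine part of the Fourier coefficient vanishes by parity. -/
lemma fourierCoeff_of_even [Fact (0 < 2 * π)] {F : AddCircle (2 * π) → ℂ} {f : ℝ → ℝ}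
    (hf : Continuous f) (heven : Function.Even f) (hF : ∀ t : ℝ, F t = f t) (m : ℤ) :
    fourierCoeff F m = ((2 * π)⁻¹ * ∫ t in 0..2 * π, f t * cos (m * t) : ℝ) := by
  have hper : Function.Periodic (fun t => f t * sin (m * t)) (2 * π) := fun t => by
    have hft : f (t + 2 * π) = f t := Complex.ofReal_injective <| by
      rw [← hF, ← hF, AddCircle.coe_add_period]
    simp only [hft, mul_add, sin_add_int_mul_two_pi]
  have hsin : ∫ t in 0..2 * π, f t * sin (m * t) = 0 :=
    intervalIntegral_eq_zero_of_odd_of_periodic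
      (fun t => by rw [heven, mul_neg, sin_neg, mul_neg]) hper
  have hsplit (t : ℝ) : fourier (-m) (t : AddCircle (2 * π)) • F t =
      (f t * cos (m * t) : ℝ) - (f t * sin (m * t) : ℝ) * Complex.I := by
    rw [fourier_two_pi_apply, hF, Int.cast_neg, neg_mul, cos_neg, sin_neg, smul_eq_mul]
    push_cast
    ring
  rw [fourierCoeff_eq_intervalIntegral _ m 0]
  simp only [hsplit, zero_add]
  rw [intervalIntegral.integral_sub (Continuous.intervalIntegrable (by fun_prop) _ _)
      (Continuous.intervalIntegrable (by fun_prop) _ _), intervalIntegral.integral_mul_const,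
    intervalIntegral.integral_ofReal, intervalIntegral.integral_ofReal, hsin]
  simp

lemma hasSum_cos_of_even_of_periodic {f : ℝ → ℝ} (hf : Continuous f) (heven : Function.Even f)
    (hper : Function.Periodic f (2 * π))
    (hs : Summable fun m : ℤ => ∫ t in 0..2 * π, f t * cos (m * t)) (x : ℝ) :
    HasSum (fun m : ℤ => (2 * π)⁻¹ * (∫ t in 0..2 * π, f t * cos (m * t)) * cos (m * x))
      (f x) := by
  have : Fact (0 < 2 * π) := ⟨two_pi_pos⟩
  have hperC : Function.Periodic (fun t => (f t : ℂ)) (2 * π) := hper.comp Complex.ofReal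
  let F : C(AddCircle (2 * π), ℂ) :=
    ⟨hperC.lift, continuous_coinduced_dom.mpr (Complex.continuous_ofReal.comp hf)⟩
  have hcoeff : fourierCoeff F = _ := funext (fourierCoeff_of_even hf heven fun _ => rfl)
  have hsummable : Summable (fourierCoeff F) := by
    rw [hcoeff]
    exact Complex.summable_ofReal.mpr (hs.mul_left _)
  have h := Complex.hasSum_re (has_pointwise_sum_fourier_series_of_summable hsummable x)
  simp only [hcoeff, smul_eq_mul, Complex.re_ofReal_mul, fourier_two_pi_apply, Complex.add_re,
    Complex.ofReal_re, Complex.I_re, mul_zero, add_zero] at h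
  exact h

/-- The cosine coefficient of `g` at the frequency `m` in the first variable only. -/
def partialCosCoeff (g : ℝ → ℝ → ℝ) (m : ℤ) (y : ℝ) : ℝ :=
  ∫ s in 0..2 * π, g s y * cos (m * s)

/-- The function with cosine coefficients `c`. -/
def cosSeries (c : ℤ × ℤ → ℝ) (x y : ℝ) : ℝ := (4 * π ^ 2)⁻¹ * ∑' k, c k * cosMode k x y

/-- The `L²` inner product, expressed in cosine coefficients. -/
def coeffPairing (c d : ℤ × ℤ → ℝ) : ℝ := (4 * π ^ 2)⁻¹ * ∑' k, c k * d k

section Expansion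

variable {g : ℝ → ℝ → ℝ}

lemma abs_mul_cosMode_le (a : ℝ) (k : ℤ × ℤ) (x y : ℝ) : |a * cosMode k x y| ≤ |a| := by
  rw [abs_mul]
  exact mul_le_of_le_one_right (abs_nonneg a) (abs_cosMode_le_one k x y)

lemma continuous_partialCosCoeff (hg : Cont2 g) (m : ℤ) : Continuous (partialCosCoeff g m) := by
  refine intervalIntegral.continuous_parametric_intervalIntegral_of_continuous' ?_ 0 (2 * π)
  have hcos : Continuous fun p : ℝ × ℝ => cos (m * p.2) := by fun_prop
  exact Continuous.mul hg.flip hcos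

lemma integral_partialCosCoeff (hg : Cont2 g) (m n : ℤ) :
    ∫ t in 0..2 * π, partialCosCoeff g m t * cos (n * t) = cosCoeff g (m, n) := by
  rw [cosCoeff, l2Inner, ← integ2_flip (hg.mul (cont2_of_mem (cosMode_mem (m, n))))]
  simp only [partialCosCoeff, ← intervalIntegral.integral_mul_const, mul_assoc]
  rfl

lemma hasSum_partialCosCoeff (hg : g ∈ smoothSymPeriodic) (m : ℤ) (y : ℝ) :
    HasSum (fun n : ℤ => (2 * π)⁻¹ * cosCoeff g (m, n) * cos (n * y)) (partialCosCoeff g m y) := by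
  have hgc := cont2_of_mem hg
  simp only [← integral_partialCosCoeff hgc]
  refine hasSum_cos_of_even_of_periodic (continuous_partialCosCoeff hgc m)
    (fun y => by simp only [partialCosCoeff, (hg.2.2 _ y).2])
    (fun y => by simp only [partialCosCoeff, (hg.2.1 _ y).2]) ?_ y
  simp only [integral_partialCosCoeff hgc]
  exact (summable_abs_cosCoeff hg).of_abs.prod_factor m

lemma hasSum_partialCosCoeff_mul_cos (hg : g ∈ smoothSymPeriodic) (x y : ℝ) :
    HasSum (fun m : ℤ => (2 * π)⁻¹ * partialCosCoeff g m y * cos (m * x))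
      (cosSeries (cosCoeff g) x y) := by
  have hsummable : Summable fun k => cosCoeff g k * cosMode k x y :=
    (summable_abs_cosCoeff hg).of_norm_bounded fun k => abs_mul_cosMode_le _ k x y
  refine (hsummable.hasSum.mul_left (4 * π ^ 2)⁻¹).prod_fiberwise fun m => ?_
  convert ((hasSum_partialCosCoeff hg m y).mul_left (2 * π)⁻¹).mul_right (cos (m * x)) using 2
  rw [cosMode]
  field_simp
  ring

/-- Expanding first in `y` and then in `x` reduces this to one variable. -/
lemma cosSeries_cosCoeff (hg : g ∈ smoothSymPeriodic) : cosSeries (cosCoeff g) = g := by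
  funext x y
  refine (hasSum_partialCosCoeff_mul_cos hg x y).unique ?_
  refine hasSum_cos_of_even_of_periodic ((cont2_of_mem hg).left y) (fun x => (hg.2.2 x y).1)
    (fun x => (hg.2.1 x y).1) ?_ x
  have h := (hasSum_partialCosCoeff_mul_cos hg 0 y).summable
  simp only [mul_zero, cos_zero, mul_one] at h
  exact (summable_mul_left_iff (inv_ne_zero two_pi_pos.ne')).mp h

end Expansion

section Parseval

variable {c : ℤ × ℤ → ℝ} {f g : ℝ → ℝ → ℝ}

lemma continuous_cosSeries (hc : Summable fun k => |c k|) : Cont2 (cosSeries c) := by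
  refine Continuous.mul continuous_const (continuous_tsum (fun k => ?_) hc fun k p => ?_)
  · exact (cont2_of_mem (cosMode_mem k)).const_smul (c k)
  · exact abs_mul_cosMode_le _ k _ _

lemma l2Inner_cosSeries (hc : Summable fun k => |c k|) (hg : Cont2 g) :
    l2Inner (cosSeries c) g = coeffPairing c (cosCoeff g) := by
  have hterm (k : ℤ × ℤ) : Cont2 (c k • cosMode k * g) :=
    ((cont2_of_mem (cosMode_mem k)).const_smul (c k)).mul hg
  have hbound (k : ℤ × ℤ) : integ2 |c k • cosMode k * g| ≤ |c k| * integ2 |g| := by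
    rw [← integ2_smul]
    refine integ2_mono (hterm k).abs (hg.abs.const_smul _) fun p _ => ?_
    simp only [Pi.abs_apply, Pi.mul_apply, Pi.smul_apply, smul_eq_mul, abs_mul (_ * _)]
    exact mul_le_mul_of_nonneg_right (abs_mul_cosMode_le _ k _ _) (abs_nonneg _)
  have hsum := hasSum_integral_of_summable_integral_norm (μ := volume.restrict square)
    (fun k => (hterm k).integrableOn isCompact_square)
    ((hc.mul_right (integ2 |g|)).of_nonneg_of_le
      (fun k => integral_nonneg fun p => norm_nonneg _) fun k =>
        (integ2_eq_setIntegral (hterm k).abs).symm.trans_le (hbound k))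
  have hcoeff (k : ℤ × ℤ) : c k * cosCoeff g k =
      ∫ p in square, (c k • cosMode k * g) p.1 p.2 := by
    rw [← integ2_eq_setIntegral (hterm k), smul_mul_assoc, integ2_smul, cosCoeff, l2Inner_comm,
      l2Inner]
  rw [l2Inner, integ2_eq_setIntegral ((continuous_cosSeries hc).mul hg), coeffPairing]
  simp only [hcoeff, hsum.tsum_eq, ← integral_const_mul]
  simp only [Pi.mul_apply, Pi.smul_apply, smul_eq_mul, cosSeries, mul_assoc,
    ← tsum_mul_right (a := g _ _)]

lemma l2Inner_eq_coeffPairing (hf : f ∈ smoothSymPeriodic) (hg : Cont2 g) :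
    l2Inner f g = coeffPairing (cosCoeff f) (cosCoeff g) := by
  rw [← l2Inner_cosSeries (summable_abs_cosCoeff hf) hg, cosSeries_cosCoeff hf]

lemma eq_zero_of_cosCoeff_eq_zero (hg : g ∈ smoothSymPeriodic) (h : ∀ k, cosCoeff g k = 0) :
    g = 0 := by
  rw [← cosSeries_cosCoeff hg]
  funext x y
  simp only [cosSeries, h, zero_mul, tsum_zero, mul_zero, Pi.zero_apply]

lemma eq_zero_of_l2Inner_self_eq_zero (hg : g ∈ smoothSymPeriodic) (h : l2Inner g g = 0) :
    g = 0 := by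
  have hsum := (rapidDecay_cosCoeff hg 0).summable_mul (summable_abs_cosCoeff hg)
  rw [l2Inner_eq_coeffPairing hg (cont2_of_mem hg), coeffPairing,
    mul_eq_zero_iff_left (by positivity), ← hsum.hasSum_iff,
    hasSum_zero_iff_of_nonneg fun k => mul_self_nonneg (cosCoeff g k)] at h
  exact eq_zero_of_cosCoeff_eq_zero hg fun k => mul_self_eq_zero.mp (congrFun h k)

end Parseval

/-! ### Smoothness of rapidly decaying cosine series -/

lemma norm_iteratedFDeriv_cos_comp_le {E : Type*} [NormedAddCommGroup E] [NormedSpace ℝ E]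
    (L : E →L[ℝ] ℝ) (n : ℕ) (p : E) : ‖iteratedFDeriv ℝ n (cos ∘ L) p‖ ≤ ‖L‖ ^ n := by
  rw [L.iteratedFDeriv_comp_right (n := n) contDiff_cos p le_rfl]
  refine (ContinuousMultilinearMap.norm_compContinuousLinearMap_le _ _).trans ?_
  rw [norm_iteratedFDeriv_eq_norm_iteratedDeriv, Finset.prod_const, Finset.card_univ,
    Fintype.card_fin]
  exact mul_le_of_le_one_left (by positivity) (abs_iteratedDeriv_cos_le_one n _)

lemma abs_add_abs_le_freqWeight (k : ℤ × ℤ) : |(k.1 : ℝ)| + |(k.2 : ℝ)| ≤ freqWeight k := by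
  rw [freqWeight]
  nlinarith [sq_nonneg (|(k.1 : ℝ)| - 1), sq_nonneg (|(k.2 : ℝ)| - 1), sq_abs (k.1 : ℝ),
    sq_abs (k.2 : ℝ), sq_nonneg (k.1 : ℝ), sq_nonneg (k.2 : ℝ)]

lemma norm_iteratedFDeriv_cosMode_le (k : ℤ × ℤ) (n : ℕ) (p : ℝ × ℝ) :
    ‖iteratedFDeriv ℝ n (fun p : ℝ × ℝ => cosMode k p.1 p.2) p‖ ≤ freqWeight k ^ n := by
  let L₁ : ℝ × ℝ →L[ℝ] ℝ := (k.1 : ℝ) • ContinuousLinearMap.fst ℝ ℝ ℝ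
  let L₂ : ℝ × ℝ →L[ℝ] ℝ := (k.2 : ℝ) • ContinuousLinearMap.snd ℝ ℝ ℝ
  have hL₁ : ‖L₁‖ ≤ |(k.1 : ℝ)| := by
    rw [norm_smul]
    exact mul_le_of_le_one_right (abs_nonneg _) (ContinuousLinearMap.norm_fst_le ℝ ℝ ℝ)
  have hL₂ : ‖L₂‖ ≤ |(k.2 : ℝ)| := by
    rw [norm_smul]
    exact mul_le_of_le_one_right (abs_nonneg _) (ContinuousLinearMap.norm_snd_le ℝ ℝ ℝ)
  calc ‖iteratedFDeriv ℝ n (fun p : ℝ × ℝ => (cos ∘ L₁) p * (cos ∘ L₂) p) p‖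
      ≤ ∑ i ∈ Finset.range (n + 1), (n.choose i : ℝ) * ‖iteratedFDeriv ℝ i (cos ∘ L₁) p‖ *
          ‖iteratedFDeriv ℝ (n - i) (cos ∘ L₂) p‖ :=
        norm_iteratedFDeriv_mul_le (contDiff_cos.comp L₁.contDiff)
          (contDiff_cos.comp L₂.contDiff) p le_rfl
    _ ≤ ∑ i ∈ Finset.range (n + 1), (n.choose i : ℝ) * ‖L₁‖ ^ i * ‖L₂‖ ^ (n - i) := by
        gcongr <;> exact norm_iteratedFDeriv_cos_comp_le _ _ _
    _ = (‖L₁‖ + ‖L₂‖) ^ n := by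
        rw [add_pow]
        exact Finset.sum_congr rfl fun i _ => by ring
    _ ≤ freqWeight k ^ n := by
        gcongr
        exact (add_le_add hL₁ hL₂).trans (abs_add_abs_le_freqWeight k)

namespace RapidDecay

variable {c : ℤ × ℤ → ℝ}

lemma smooth2_cosSeries (hc : RapidDecay c) : Smooth2 (cosSeries c) := by
  have hterm (k : ℤ × ℤ) : ContDiff ℝ (⊤ : ℕ∞) fun p : ℝ × ℝ => cosMode k p.1 p.2 :=
    (cosMode_mem k).1
  refine ContDiff.mul contDiff_const (contDiff_tsum (fun k => contDiff_const.mul (hterm k))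
    (fun n _ => (hc (2 + n)).freqWeight_pow_mul.summable_abs) fun n k p hn => ?_)
  have hsmul := iteratedFDeriv_const_smul_apply (a := c k) (x := p)
    ((hterm k).of_le (mod_cast hn)).contDiffAt
  rw [abs_mul, abs_of_pos (pow_pos (freqWeight_pos k) n), mul_comm]
  refine (congrArg norm hsmul).trans_le ?_
  rw [norm_smul]
  exact mul_le_mul_of_nonneg_left (norm_iteratedFDeriv_cosMode_le k n p) (norm_nonneg _)

lemma cosSeries_mem (hc : RapidDecay c) : cosSeries c ∈ smoothSymPeriodic :=
  ⟨hc.smooth2_cosSeries,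
    fun x y => by
      simp only [cosSeries, ((cosMode_mem _).2.1 x y).1, ((cosMode_mem _).2.1 x y).2, and_self],
    fun x y => by
      simp only [cosSeries, ((cosMode_mem _).2.2 x y).1, ((cosMode_mem _).2.2 x y).2, and_self]⟩

end RapidDecay

/-! ### Elliptic regularity -/

/-- The frequency `k + (σ₁ j₁, σ₂ j₂)` for a choice of signs `σ`. These are the frequencies that
occur in `cosMode j * cosMode k`. -/
def signedShift (σ : ℤˣ × ℤˣ) (k j : ℤ × ℤ) : ℤ × ℤ := (k.1 + σ.1 * j.1, k.2 + σ.2 * j.2)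

lemma bijective_signedShift (σ : ℤˣ × ℤˣ) (k : ℤ × ℤ) : Function.Bijective (signedShift σ k) :=
  (((Units.mulLeft σ.1).trans (Equiv.addLeft k.1)).prodCongr
    ((Units.mulLeft σ.2).trans (Equiv.addLeft k.2))).bijective

lemma cos_mul_cos_eq_sum_units (a b : ℝ) :
    cos a * cos b = 2⁻¹ * ∑ u : ℤˣ, cos (b + (u : ℤ) * a) := by
  simp only [UnitsInt.univ, Finset.sum_pair (show (1 : ℤˣ) ≠ -1 by decide), Units.val_one,
    Units.val_neg, Int.cast_one, Int.cast_neg, neg_mul, one_mul, cos_add, cos_neg, sin_neg]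
  ring

lemma cosMode_mul_cosMode (j k : ℤ × ℤ) :
    cosMode j * cosMode k = (4⁻¹ : ℝ) • ∑ σ, cosMode (signedShift σ k j) := by
  funext x y
  calc cosMode j x y * cosMode k x y
      = (cos (j.1 * x) * cos (k.1 * x)) * (cos (j.2 * y) * cos (k.2 * y)) := by
        simp only [cosMode]
        ring
    _ = 4⁻¹ * ∑ σ : ℤˣ × ℤˣ, cos (k.1 * x + (σ.1 : ℤ) * (j.1 * x)) *
          cos (k.2 * y + (σ.2 : ℤ) * (j.2 * y)) := by
        rw [cos_mul_cos_eq_sum_units, cos_mul_cos_eq_sum_units, mul_mul_mul_comm,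
          Fintype.sum_mul_sum, ← Fintype.sum_prod_type']
        norm_num
    _ = ((4⁻¹ : ℝ) • ∑ σ, cosMode (signedShift σ k j)) x y := by
        simp only [cosMode, signedShift, Pi.smul_apply, Finset.sum_apply, smul_eq_mul]
        push_cast
        simp only [add_mul, mul_assoc]

lemma cosCoeff_mul_cosMode {U : ℝ → ℝ → ℝ} (hU : Cont2 U) (j k : ℤ × ℤ) :
    cosCoeff (U * cosMode k) j = 4⁻¹ * ∑ σ, cosCoeff U (signedShift σ k j) := by
  rw [cosCoeff, mul_comm U, ← l2Inner_mul_comm, mul_comm, cosMode_mul_cosMode,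
    l2Inner_smul_right, l2Inner_sum_right hU fun σ => cont2_of_mem (cosMode_mem _)]
  rfl

/-- Peetre's inequality. -/
lemma freqWeight_le_mul_signedShift (σ : ℤˣ × ℤˣ) (k j : ℤ × ℤ) :
    freqWeight k ≤ 2 * freqWeight j * freqWeight (signedShift σ k j) := by
  have sq_le (a b : ℤ) (u : ℤˣ) :
      (a : ℝ) ^ 2 ≤ 2 * (b : ℝ) ^ 2 + 2 * (a + (u : ℤ) * b : ℝ) ^ 2 := by
    have hu : ((u : ℤ) : ℝ) ^ 2 = 1 := by rcases Int.units_eq_one_or u with rfl | rfl <;> simp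
    have hub : ((u : ℤ) * b : ℝ) ^ 2 = b ^ 2 := by rw [mul_pow, hu, one_mul]
    nlinarith [sq_nonneg (a + 2 * ((u : ℤ) * b) : ℝ)]
  have h1 := sq_le k.1 j.1 σ.1
  have h2 := sq_le k.2 j.2 σ.2
  simp only [freqWeight, signedShift, Int.cast_add, Int.cast_mul]
  nlinarith [mul_nonneg (add_nonneg (sq_nonneg (j.1 : ℝ)) (sq_nonneg (j.2 : ℝ)))
    (add_nonneg (sq_nonneg (k.1 + (σ.1 : ℤ) * j.1 : ℝ)) (sq_nonneg (k.2 + (σ.2 : ℤ) * j.2 : ℝ)))]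

namespace HasDecay

variable {s : ℕ} {c d : ℤ × ℤ → ℝ}

lemma const_mul (hc : HasDecay s c) (a : ℝ) : HasDecay s (fun k => a * c k) := by
  obtain ⟨C, hC⟩ := hc
  refine ⟨|a| * C, fun k => ?_⟩
  rw [abs_mul, mul_left_comm]
  exact mul_le_mul_of_nonneg_left (hC k) (abs_nonneg a)

lemma sum {ι : Type*} {S : Finset ι} {c : ι → ℤ × ℤ → ℝ} (hc : ∀ i, HasDecay s (c i)) :
    HasDecay s (fun k => ∑ i ∈ S, c i k) := by
  choose C hC using hc
  refine ⟨∑ i ∈ S, C i, fun k => ?_⟩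
  calc freqWeight k ^ s * |∑ i ∈ S, c i k|
      ≤ freqWeight k ^ s * ∑ i ∈ S, |c i k| := by
        have hk := freqWeight_pos k
        gcongr
        exact Finset.abs_sum_le_sum_abs _ _
    _ ≤ ∑ i ∈ S, C i := by
        rw [Finset.mul_sum]
        exact Finset.sum_le_sum fun i _ => hC i k

lemma exists_pow_mul_abs_mul_signedShift_le (hc : HasDecay s c) (hd : HasDecay (s + 2) d)
    (σ : ℤˣ × ℤˣ) : ∃ C, ∀ k j, freqWeight k ^ s * |c j * d (signedShift σ k j)| ≤
      C * (freqWeight (signedShift σ k j) ^ 2)⁻¹ := by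
  obtain ⟨C, hC⟩ := hc
  obtain ⟨D, hD⟩ := hd
  have hC0 : 0 ≤ C := (mul_nonneg (pow_pos (freqWeight_pos 0) _).le (abs_nonneg _)).trans (hC 0)
  refine ⟨2 ^ s * C * D, fun k j => ?_⟩
  set i := signedShift σ k j
  have hk := freqWeight_pos k
  have hi := freqWeight_pos i
  rw [← div_eq_mul_inv, le_div_iff₀ (by positivity), abs_mul]
  calc freqWeight k ^ s * (|c j| * |d i|) * freqWeight i ^ 2
      ≤ (2 * freqWeight j * freqWeight i) ^ s * (|c j| * |d i|) * freqWeight i ^ 2 := by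
        gcongr
        exact freqWeight_le_mul_signedShift σ k j
    _ = 2 ^ s * (freqWeight j ^ s * |c j|) * (freqWeight i ^ (s + 2) * |d i|) := by
        rw [mul_pow, mul_pow]
        ring
    _ ≤ 2 ^ s * C * D := by
        gcongr
        · exact hC j
        · exact hD i

lemma tsum_mul_signedShift (hc : HasDecay s c) (hd : HasDecay (s + 2) d) (σ : ℤˣ × ℤˣ) :
    HasDecay s (fun k => ∑' j, c j * d (signedShift σ k j)) := by
  obtain ⟨C, hC⟩ := hc.exists_pow_mul_abs_mul_signedShift_le hd σ
  refine ⟨C * ∑' i, (freqWeight i ^ 2)⁻¹, fun k => ?_⟩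
  rw [← abs_of_pos (pow_pos (freqWeight_pos k) s), ← abs_mul, ← tsum_mul_left]
  have hsum : HasSum (fun j => (freqWeight (signedShift σ k j) ^ 2)⁻¹)
      (∑' i, (freqWeight i ^ 2)⁻¹) :=
    (Equiv.ofBijective _ (bijective_signedShift σ k)).hasSum_iff.mpr
      summable_freqWeight_sq_inv.hasSum
  rw [← norm_eq_abs]
  refine tsum_of_norm_bounded (hsum.mul_left C) fun j => ?_
  rw [norm_eq_abs, abs_mul, abs_of_pos (pow_pos (freqWeight_pos k) s)]
  exact hC k j

/-- Multiplication by `U` preserves decay of order `s`: the pairing is the cosine coefficient of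
`U * cosSeries c`. -/
lemma coeffPairing_mul_cosMode {U : ℝ → ℝ → ℝ} (hc : HasDecay s c) (hU : U ∈ smoothSymPeriodic) :
    HasDecay s (fun k => coeffPairing c (cosCoeff (U * cosMode k))) := by
  have hsummable (σ : ℤˣ × ℤˣ) (k : ℤ × ℤ) :
      Summable fun j => c j * cosCoeff U (signedShift σ k j) :=
    (hc.mono s.zero_le).summable_mul
      ((summable_abs_cosCoeff hU).comp_injective (bijective_signedShift σ k).injective)
  have hpairing (k : ℤ × ℤ) : coeffPairing c (cosCoeff (U * cosMode k)) =
      (4 * π ^ 2)⁻¹ * (4⁻¹ * ∑ σ, ∑' j, c j * cosCoeff U (signedShift σ k j)) := by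
    rw [coeffPairing, ← Summable.tsum_finsetSum fun σ _ => hsummable σ k,
      ← tsum_mul_left (a := 4⁻¹)]
    simp only [cosCoeff_mul_cosMode (cont2_of_mem hU), ← Finset.mul_sum, mul_left_comm]
  simp only [hpairing]
  exact ((sum fun σ => hc.tsum_mul_signedShift (rapidDecay_cosCoeff hU _) σ).const_mul
    4⁻¹).const_mul _

end HasDecay

/-- The hypothesis says that `c` solves `(1 - Δ) u = U u` weakly; the right-hand side decays as fast
as `c`, so each use of the equation gains two orders of decay. -/
lemma rapidDecay_of_freqWeight_mul_eq {U : ℝ → ℝ → ℝ} {c : ℤ × ℤ → ℝ} (hU : U ∈ smoothSymPeriodic)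
    (hc : HasDecay 0 c)
    (h : ∀ k, freqWeight k * c k = coeffPairing c (cosCoeff (U * cosMode k))) :
    RapidDecay c := by
  intro s
  induction s with
  | zero => exact hc
  | succ s ih =>
    rw [hasDecay_succ_iff]
    simpa only [h] using ih.coeffPairing_mul_cosMode hU

/-! ### Low modes -/

section LowModes

variable {W v : ℝ → ℝ → ℝ}

lemma mul_l2Inner_self_sub_sum_le_energy_one (hv : v ∈ smoothSymPeriodic) {S : Finset (ℤ × ℤ)}
    {R : ℝ} (hS : ∀ k ∉ S, R ≤ freqWeight k) :
    R * (l2Inner v v - (4 * π ^ 2)⁻¹ * ∑ k ∈ S, cosCoeff v k ^ 2) ≤ energy 1 v := by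
  have hmass : Summable fun k => cosCoeff v k * cosCoeff v k :=
    (rapidDecay_cosCoeff hv 0).summable_mul (summable_abs_cosCoeff hv)
  have henergy : Summable fun k => cosCoeff v k * (freqWeight k * cosCoeff v k) := by
    simpa only [cosCoeff_schrodinger_one hv] using (rapidDecay_cosCoeff hv 0).summable_mul
      (summable_abs_cosCoeff (schrodinger_mem (one_mem _) hv))
  have htail : ∑ k ∈ S, (cosCoeff v k * (freqWeight k * cosCoeff v k) -
      R * (cosCoeff v k * cosCoeff v k)) ≤ ∑' k, cosCoeff v k * (freqWeight k * cosCoeff v k) -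
        R * ∑' k, cosCoeff v k * cosCoeff v k := by
    rw [← tsum_mul_left, ← henergy.tsum_sub (hmass.mul_left R)]
    refine (henergy.sub (hmass.mul_left R)).sum_le_tsum S fun k hk => ?_
    nlinarith [mul_nonneg (sub_nonneg.mpr (hS k hk)) (sq_nonneg (cosCoeff v k))]
  have hlow : -(R * ∑ k ∈ S, cosCoeff v k ^ 2) ≤ ∑ k ∈ S,
      (cosCoeff v k * (freqWeight k * cosCoeff v k) - R * (cosCoeff v k * cosCoeff v k)) := by
    rw [Finset.mul_sum, ← Finset.sum_neg_distrib]
    refine Finset.sum_le_sum fun k _ => ?_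
    nlinarith [mul_nonneg (freqWeight_pos k).le (sq_nonneg (cosCoeff v k))]
  rw [← l2Inner_schrodinger_self (one_mem _) hv, l2Inner_eq_coeffPairing hv (cont2_of_mem hv),
    l2Inner_eq_coeffPairing hv (cont2_of_mem (schrodinger_mem (one_mem _) hv)), coeffPairing,
    coeffPairing, ← mul_sub, mul_left_comm]
  simp only [cosCoeff_schrodinger_one hv]
  refine mul_le_mul_of_nonneg_left ?_ (by positivity)
  rw [mul_sub]
  linarith

lemma exists_finset_half_le_sum_sq_cosCoeff (hW : W ∈ smoothSymPeriodic) :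
    ∃ S : Finset (ℤ × ℤ), ∀ v ∈ smoothSymPeriodic, l2Inner v v = 1 → energy W v ≤ 1 →
      1 / 2 ≤ (4 * π ^ 2)⁻¹ * ∑ k ∈ S, cosCoeff v k ^ 2 := by
  obtain ⟨K, hK⟩ := exists_energy_one_le hW
  set R := 2 * (1 + |K|)
  refine ⟨(finite_setOf_freqWeight_le R).toFinset, fun v hv hnorm henergy => ?_⟩
  have htail := mul_l2Inner_self_sub_sum_le_energy_one hv (R := R)
    (S := (finite_setOf_freqWeight_le R).toFinset) fun k hk => by
      rw [Set.Finite.mem_toFinset] at hk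
      exact (not_le.mp hk).le
  have hgarding := hK v hv
  rw [hnorm] at htail hgarding
  have hR : 0 < 1 + |K| := by positivity
  nlinarith [le_abs_self K]

lemma abs_cosCoeff_le_of_l2Inner_self_eq_one (hv : Cont2 v) (hnorm : l2Inner v v = 1)
    (k : ℤ × ℤ) : |cosCoeff v k| ≤ (1 + 4 * π ^ 2) / 2 := by
  have hone : Cont2 1 := continuous_const
  have hsum := (hv.mul hv).add hone
  calc |cosCoeff v k| ≤ integ2 |v| := abs_cosCoeff_le hv k
    _ ≤ integ2 ((2⁻¹ : ℝ) • (v * v + 1)) := by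
        refine integ2_mono hv.abs (hsum.const_smul _) fun p _ => ?_
        simp only [Pi.abs_apply, Pi.smul_apply, Pi.add_apply, Pi.mul_apply, Pi.one_apply,
          smul_eq_mul]
        nlinarith [sq_nonneg (|v p.1 p.2| - 1), sq_abs (v p.1 p.2)]
    _ = (1 + 4 * π ^ 2) / 2 := by
        rw [integ2_smul, integ2_add (hv.mul hv) hone, integ2_one, ← l2Inner, hnorm]
        ring

end LowModes

/-! ### Weak limits of sequences with vanishing energy -/

section WeakLimit

variable {W : ℝ → ℝ → ℝ} {c : ℤ × ℤ → ℝ} {B : ℝ}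

lemma exists_strictMono_tendsto_of_abs_le {κ : Type*} [Countable κ] {a : ℕ → κ → ℝ}
    (ha : ∀ n k, |a n k| ≤ B) : ∃ (c : κ → ℝ) (θ : ℕ → ℕ), StrictMono θ ∧ (∀ k, |c k| ≤ B) ∧
      ∀ k, Tendsto (fun n => a (θ n) k) atTop (nhds (c k)) := by
  obtain ⟨c, hc, θ, hθ, hlim⟩ := (isCompact_univ_pi fun _ => isCompact_Icc).tendsto_subseq
    (x := a) fun n k _ => Set.mem_Icc.mpr (abs_le.mp (ha n k))
  exact ⟨c, θ, hθ, fun k => abs_le.mpr (hc k trivial), tendsto_pi_nhds.mp hlim⟩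

variable {ι : Type*} {l : Filter ι} {v : ι → ℝ → ℝ → ℝ}

lemma tendsto_l2Inner_of_tendsto_cosCoeff {g : ℝ → ℝ → ℝ} (hv : ∀ i, v i ∈ smoothSymPeriodic)
    (hB : ∀ i k, |cosCoeff (v i) k| ≤ B)
    (hc : ∀ k, Tendsto (fun i => cosCoeff (v i) k) l (nhds (c k))) (hg : g ∈ smoothSymPeriodic) :
    Tendsto (fun i => l2Inner (v i) g) l (nhds (coeffPairing c (cosCoeff g))) := by
  simp only [l2Inner_eq_coeffPairing (hv _) (cont2_of_mem hg), coeffPairing]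
  refine (tendsto_tsum_of_dominated_convergence ((summable_abs_cosCoeff hg).mul_left B)
    (fun k => (hc k).mul_const _) (Eventually.of_forall fun i k => ?_)).const_mul _
  rw [norm_mul]
  exact mul_le_mul_of_nonneg_right (hB i k) (abs_nonneg _)

lemma tendsto_l2Inner_schrodinger_zero {g : ℝ → ℝ → ℝ} (hW : W ∈ smoothSymPeriodic)
    (hnonneg : ∀ w ∈ smoothSymPeriodic, 0 ≤ energy W w) (hv : ∀ i, v i ∈ smoothSymPeriodic)
    (henergy : Tendsto (fun i => energy W (v i)) l (nhds 0)) (hg : g ∈ smoothSymPeriodic) :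
    Tendsto (fun i => l2Inner (v i) (schrodinger W g)) l (nhds 0) := by
  refine squeeze_zero_norm
    (fun i => abs_le_sqrt (sq_l2Inner_schrodinger_le hW hnonneg (hv i) hg)) ?_
  simpa only [zero_mul, sqrt_zero] using (henergy.mul_const (energy W g)).sqrt

lemma freqWeight_mul_cosCoeff {u : ℝ → ℝ → ℝ} (hW : W ∈ smoothSymPeriodic) (hu : Cont2 u)
    (k : ℤ × ℤ) : freqWeight k * cosCoeff u k =
      l2Inner u (schrodinger W (cosMode k)) + l2Inner u ((1 - W) * cosMode k) := by
  have hmode := cosMode_mem k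
  rw [← l2Inner_add_right hu (cont2_of_mem (schrodinger_mem hW hmode))
    (cont2_of_mem (mul_mem (sub_mem (one_mem _) hW) hmode)), cosCoeff, ← l2Inner_smul_right,
    ← schrodinger_one_cosMode, schrodinger, schrodinger]
  congr 1
  ring

lemma exists_subseq_weak_limit_mem_ker {v : ℕ → ℝ → ℝ → ℝ} (hW : W ∈ smoothSymPeriodic)
    (hnonneg : ∀ w ∈ smoothSymPeriodic, 0 ≤ energy W w) (hv : ∀ n, v n ∈ smoothSymPeriodic)
    (hB : ∀ n k, |cosCoeff (v n) k| ≤ B)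
    (henergy : Tendsto (fun n => energy W (v n)) atTop (nhds 0)) :
    ∃ V ∈ smoothSymPeriodic, schrodinger W V = 0 ∧ ∃ θ : ℕ → ℕ, StrictMono θ ∧
      ∀ g ∈ smoothSymPeriodic,
        Tendsto (fun n => l2Inner (v (θ n)) g) atTop (nhds (l2Inner V g)) := by
  obtain ⟨c, θ, hθ, hcB, hc⟩ := exists_strictMono_tendsto_of_abs_le hB
  have hpairing {g : ℝ → ℝ → ℝ} (hg : g ∈ smoothSymPeriodic) :
      Tendsto (fun n => l2Inner (v (θ n)) g) atTop (nhds (coeffPairing c (cosCoeff g))) :=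
    tendsto_l2Inner_of_tendsto_cosCoeff (fun n => hv (θ n)) (fun n => hB (θ n)) hc hg
  have hschrodinger (k : ℤ × ℤ) :
      Tendsto (fun n => l2Inner (v (θ n)) (schrodinger W (cosMode k))) atTop (nhds 0) :=
    tendsto_l2Inner_schrodinger_zero hW hnonneg (fun n => hv (θ n))
      (henergy.comp hθ.tendsto_atTop) (cosMode_mem k)
  have hU : 1 - W ∈ smoothSymPeriodic := sub_mem (one_mem _) hW
  have hweak (k : ℤ × ℤ) :
      freqWeight k * c k = coeffPairing c (cosCoeff ((1 - W) * cosMode k)) := by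
    refine tendsto_nhds_unique ((hc k).const_mul (freqWeight k)) ?_
    simp only [freqWeight_mul_cosCoeff hW (cont2_of_mem (hv (θ _))) k]
    simpa only [zero_add] using (hschrodinger k).add (hpairing (mul_mem hU (cosMode_mem k)))
  have hdecay : RapidDecay c := rapidDecay_of_freqWeight_mul_eq hU
    ⟨B, fun k => by simpa only [pow_zero, one_mul] using hcB k⟩ hweak
  have hlim (g : ℝ → ℝ → ℝ) (hg : g ∈ smoothSymPeriodic) :
      Tendsto (fun n => l2Inner (v (θ n)) g) atTop (nhds (l2Inner (cosSeries c) g)) := by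
    rw [l2Inner_cosSeries (hdecay 2).summable_abs (cont2_of_mem hg)]
    exact hpairing hg
  have hV := hdecay.cosSeries_mem
  refine ⟨cosSeries c, hV, eq_zero_of_cosCoeff_eq_zero (schrodinger_mem hW hV) fun k => ?_, θ, hθ,
    hlim⟩
  rw [cosCoeff, ← l2Inner_schrodinger_comm hW hV (cosMode_mem k)]
  exact tendsto_nhds_unique (hlim _ (schrodinger_mem hW (cosMode_mem k))) (hschrodinger k)

lemma ne_zero_of_weak_limit [l.NeBot] {V : ℝ → ℝ → ℝ} (hW : W ∈ smoothSymPeriodic)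
    (hv : ∀ i, v i ∈ smoothSymPeriodic) (hnorm : ∀ i, l2Inner (v i) (v i) = 1)
    (henergy : ∀ᶠ i in l, energy W (v i) ≤ 1)
    (hlim : ∀ g ∈ smoothSymPeriodic, Tendsto (fun i => l2Inner (v i) g) l (nhds (l2Inner V g))) :
    V ≠ 0 := by
  rintro rfl
  obtain ⟨S, hS⟩ := exists_finset_half_le_sum_sq_cosCoeff hW
  have hcoeff (k : ℤ × ℤ) : Tendsto (fun i => cosCoeff (v i) k) l (nhds 0) := by
    have hzero : l2Inner 0 (cosMode k) = 0 := by
      simpa only [zero_smul, zero_mul] using l2Inner_smul_left 0 0 (cosMode k)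
    simpa only [cosCoeff, hzero] using hlim _ (cosMode_mem k)
  have hmass : Tendsto (fun i => (4 * π ^ 2)⁻¹ * ∑ k ∈ S, cosCoeff (v i) k ^ 2) l (nhds 0) := by
    simpa only [ne_eq, two_ne_zero, not_false_eq_true, zero_pow, Finset.sum_const_zero, mul_zero]
      using (tendsto_finsetSum S fun k _ => (hcoeff k).pow 2).const_mul (4 * π ^ 2)⁻¹
  have hhalf : (1 / 2 : ℝ) ≤ 0 :=
    ge_of_tendsto hmass (henergy.mono fun i hi => hS _ (hv i) (hnorm i) hi)
  norm_num at hhalf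

end WeakLimit

/-! ### Coercivity -/

section Coercivity

variable {W : ℝ → ℝ → ℝ}

lemma exists_pos_le_energy_of_l2Inner_self_eq_one (hW : W ∈ smoothSymPeriodic)
    (hnonneg : ∀ w ∈ smoothSymPeriodic, 0 ≤ energy W w) :
    ∃ δ > 0, ∀ v ∈ smoothSymPeriodic, l2Inner v v = 1 →
      (∀ w ∈ smoothSymPeriodic, schrodinger W w = 0 → l2Inner v w = 0) → δ ≤ energy W v := by
  by_contra! hsmall
  choose v hv hnorm horth hlt using fun n : ℕ => hsmall (1 / ((n : ℝ) + 1)) (by positivity)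
  have henergy : Tendsto (fun n => energy W (v n)) atTop (nhds 0) :=
    squeeze_zero (fun n => hnonneg _ (hv n)) (fun n => (hlt n).le)
      tendsto_one_div_add_atTop_nhds_zero_nat
  obtain ⟨V, hV, hker, θ, hθ, hlim⟩ := exists_subseq_weak_limit_mem_ker hW hnonneg hv
    (fun n => abs_cosCoeff_le_of_l2Inner_self_eq_one (cont2_of_mem (hv n)) (hnorm n)) henergy
  have hVne : V ≠ 0 := ne_zero_of_weak_limit hW (fun n => hv (θ n)) (fun n => hnorm (θ n))
    ((henergy.comp hθ.tendsto_atTop).eventually_le_const one_pos) hlim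
  refine hVne (eq_zero_of_l2Inner_self_eq_zero hV (tendsto_nhds_unique (hlim V hV) ?_))
  simp only [horth _ V hV hker, tendsto_const_nhds]

theorem coercivity_on_orthogonal_complement_general (hW : W ∈ smoothSymPeriodic)
    (hnonneg : ∀ w ∈ smoothSymPeriodic, 0 ≤ energy W w) :
    ∃ δ > 0, ∀ v ∈ smoothSymPeriodic,
      (∀ w ∈ smoothSymPeriodic, schrodinger W w = 0 → l2Inner v w = 0) →
        δ * integ2 (fun x y => v x y ^ 2) ≤ energy W v := by
  obtain ⟨δ, hδ, hcoercive⟩ := exists_pos_le_energy_of_l2Inner_self_eq_one hW hnonneg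
  refine ⟨δ, hδ, fun v hv horth => ?_⟩
  have hmass : integ2 (fun x y => v x y ^ 2) = l2Inner v v := by
    simp only [pow_two]
    rfl
  rw [hmass]
  rcases (l2Inner_self_nonneg (cont2_of_mem hv)).eq_or_lt with hzero | hpos
  · rw [← hzero, mul_zero]
    exact hnonneg v hv
  set t := (√(l2Inner v v))⁻¹
  have ht : t ^ 2 = (l2Inner v v)⁻¹ := by rw [inv_pow, sq_sqrt hpos.le]
  have hunit : l2Inner (t • v) (t • v) = 1 := by
    rw [l2Inner_smul_left, l2Inner_smul_right, ← mul_assoc, ← pow_two, ht,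
      inv_mul_cancel₀ hpos.ne']
  have h := hcoercive (t • v) (Subalgebra.smul_mem _ hv t) hunit fun w hw hker => by
    rw [l2Inner_smul_left, horth w hw hker, mul_zero]
  rwa [energy_smul hW t hv, ht, le_inv_mul_iff₀ hpos, mul_comm] at h

end Coercivity

/-- Coercivity of 𝓛₂ = −Δ + W on the orthogonal complement of its one-dimensional
kernel span{φ}: the quadratic form is bounded below by δ‖v‖² on {v : ∫vφ = 0}. -/
theorem coercivity_on_orthogonal_complement (W : ℝ → ℝ → ℝ)
    (hWs : Smooth2 W) (hWper : DblPeriodic W) (hWsym : SymFun W)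
    (φ : ℝ → ℝ → ℝ) (hφs : Smooth2 φ) (hφper : DblPeriodic φ) (hφsym : SymFun φ)
    (hφne : ∃ x y : ℝ, φ x y ≠ 0)
    (hφeq : ∀ x y : ℝ, -(lap φ x y) + W x y * φ x y = 0)
    (hnonneg : ∀ v : ℝ → ℝ → ℝ, Smooth2 v → DblPeriodic v → SymFun v →
      0 ≤ integ2 (fun x y => (pdx v x y)^2 + (pdy v x y)^2 + W x y * (v x y)^2))
    (hker : ∀ v : ℝ → ℝ → ℝ, Smooth2 v → DblPeriodic v → SymFun v →
      (∀ x y : ℝ, -(lap v x y) + W x y * v x y = 0) →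
      ∃ α : ℝ, ∀ x y : ℝ, v x y = α * φ x y) :
    ∃ δ > (0:ℝ), ∀ v : ℝ → ℝ → ℝ, Smooth2 v → DblPeriodic v → SymFun v →
      integ2 (fun x y => v x y * φ x y) = 0 →
      δ * integ2 (fun x y => (v x y)^2) ≤
        integ2 (fun x y => (pdx v x y)^2 + (pdy v x y)^2 + W x y * (v x y)^2) := by
  have hW : W ∈ smoothSymPeriodic := ⟨hWs, hWper, hWsym⟩
  obtain ⟨δ, hδ, hcoercive⟩ := coercivity_on_orthogonal_complement_general hW
    fun v hv => hnonneg v hv.1 hv.2.1 hv.2.2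
  refine ⟨δ, hδ, fun v hvs hvper hvsym horth => hcoercive v ⟨hvs, hvper, hvsym⟩ fun w hw hw0 => ?_⟩
  obtain ⟨α, hα⟩ := hker w hw.1 hw.2.1 hw.2.2 fun x y => congrFun₂ hw0 x y
  have hw_eq : w = α • φ := funext₂ hα
  rw [hw_eq, l2Inner_smul_right]
  exact mul_eq_zero_of_right α horth
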